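/- Relation between the Binet–Legendre unit ball and the Legendre ellipsoid: let F be a Minkowski norm on an n-dimensional real vector space V, let Ω = {ξ : F(ξ) < 1} be its unit ball, let g_F be the Binet–Legendre scalar product of F, and let B = {ξ ∈ V : g_F(ξ,ξ) < 1} be the unit ball of g_F. Fix a Lebesgue (Haar) measure λ on V and set s = (λ(Ω)/λ(B))^{1/(n+2)}. Then the dilated ellipsoid s·B has the same moments of inertia as Ω in every codirection: for every linear functional θ ∈ V*, ∫_{s·B} θ(ξ)² dλ(ξ) = ∫_Ω θ(ξ)² dλ(ξ). -/

import Mathlib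

/-!
Write `n = dim V`. In a Euclidean space the unit ball `B` has second moments
`∫_B ⟪v, x⟫² = ‖v‖² / (n + 2) * λ(B)`: by reflection the left side depends on `v` only through
`‖v‖`, and summing over an orthonormal basis gives `∫_B ‖x‖²`, computed in polar coordinates.
Transported to `V`, this evaluates the moments of the unit ball of `g_F` in the codirection
`θ = g_F ξ`. By definition `g_F` normalises the moments of `Ω` to
`∫_Ω (g_F ξ)² = g_F(ξ, ξ) / (n + 2) * λ(Ω)`, so the two agree up to the factor `λ(Ω) / λ(B)`,
which is `s ^ (n + 2)`: exactly how dilation by `s` scales a second moment.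
-/

open MeasureTheory
open scoped Pointwise

/-- A Minkowski norm on a real topological vector space: continuous, nonnegative,
positively homogeneous, subadditive, and vanishing only at `0`. -/
def IsMinkowskiNorm {V : Type*} [AddCommGroup V] [Module ℝ V] [TopologicalSpace V]
    (F : V → ℝ) : Prop :=
  Continuous F ∧ (∀ ξ, 0 ≤ F ξ) ∧ (∀ c : ℝ, 0 ≤ c → ∀ ξ, F (c • ξ) = c * F ξ) ∧
    (∀ ξ η, F (ξ + η) ≤ F ξ + F η) ∧ ∀ ξ, F ξ = 0 → ξ = 0

/-- The Binet–Legendre dual scalar product of `F`: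
`g*_F(θ,φ) = ((n+2)/μ(Ω)) ∫_Ω θ(η)·φ(η) dμ(η)` where `Ω = {ξ | F ξ < 1}`. -/
noncomputable def BLdual {V : Type*} [AddCommGroup V] [Module ℝ V] [MeasurableSpace V]
    (n : ℕ) (μ : Measure V) (F : V → ℝ) (θ φ : V →ₗ[ℝ] ℝ) : ℝ :=
  ((n + 2 : ℝ) / (μ {ξ | F ξ < 1}).toReal) * ∫ η in {ξ | F ξ < 1}, θ η * φ η ∂μ

/-- `g` is the Binet–Legendre scalar product of `F`: the bilinear form on `V` dual to
the Binet–Legendre dual scalar product `g*_F` on `V*`. -/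
def IsBLMetric {V : Type*} [AddCommGroup V] [Module ℝ V] [MeasurableSpace V]
    (n : ℕ) (μ : Measure V) (F : V → ℝ) (g : V →ₗ[ℝ] V →ₗ[ℝ] ℝ) : Prop :=
  ∀ ξ : V, ∀ θ : V →ₗ[ℝ] ℝ, BLdual n μ F (g ξ) θ = θ ξ

open Set Metric

section NormedSpace

variable {E : Type*} [NormedAddCommGroup E] [NormedSpace ℝ E] [FiniteDimensional ℝ E]
  [MeasurableSpace E] [BorelSpace E] (μ : Measure E) [μ.IsAddHaarMeasure]

theorem measurePreserving_linearIsometryEquiv (R : E ≃ₗᵢ[ℝ] E) : MeasurePreserving R μ μ := by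
  set f : E →ₗ[ℝ] E := R.toLinearEquiv.toLinearMap
  have hdet : LinearMap.det f ≠ 0 := R.toLinearEquiv.isUnit_det'.ne_zero
  have hpre : f ⁻¹' ball 0 1 = ball 0 1 := by ext x; simp [f]
  have hball := Measure.addHaar_preimage_linearMap μ hdet (ball 0 1)
  rw [hpre] at hball
  have hscale : ENNReal.ofReal |(LinearMap.det f)⁻¹| = 1 :=
    (ENNReal.mul_eq_right (measure_ball_pos μ 0 one_pos).ne' measure_ball_lt_top.ne).mp hball.symm
  have hmap := Measure.map_linearMap_addHaar_eq_smul_addHaar μ hdet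
  rw [hscale, one_smul] at hmap
  exact ⟨R.continuous.measurable, hmap⟩

theorem setIntegral_ball_norm_pow [Nontrivial E] {r : ℝ} (hr : 0 ≤ r) (k : ℕ) :
    ∫ x in ball (0 : E) r, ‖x‖ ^ k ∂μ =
      Module.finrank ℝ E / (Module.finrank ℝ E + k : ℝ) * r ^ k * μ.real (ball 0 r) := by
  set n := Module.finrank ℝ E
  have hn : 0 < n := Module.finrank_pos
  have hindicator (x : E) : (ball (0 : E) r).indicator (fun x => ‖x‖ ^ k) x =
      (Iio r).indicator (fun y => y ^ k) ‖x‖ := by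
    by_cases hx : ‖x‖ < r <;> simp [hx, indicator]
  have hpow (y : ℝ) : y ^ (n - 1) • (Iio r).indicator (fun y => y ^ k) y =
      (Iio r).indicator (fun y => y ^ (n - 1 + k)) y := by
    simp only [indicator, smul_eq_mul, mul_ite, mul_zero, pow_add]
  have hradial : ∫ y in Ioi (0 : ℝ), y ^ (n - 1) • (Iio r).indicator (fun y => y ^ k) y =
      r ^ (n + k) / (n + k : ℝ) := by
    simp_rw [hpow]
    rw [setIntegral_indicator measurableSet_Iio, Ioi_inter_Iio, ← integral_Ioc_eq_integral_Ioo,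
      ← intervalIntegral.integral_of_le hr, integral_pow, show n - 1 + k + 1 = n + k by lia,
      zero_pow (by lia), sub_zero, ← Nat.cast_add_one, show n - 1 + k + 1 = n + k by lia,
      Nat.cast_add]
  have hvolume : μ.real (ball (0 : E) r) = r ^ n * μ.real (ball (0 : E) 1) := by
    rw [measureReal_def, Measure.addHaar_ball μ 0 hr, ENNReal.toReal_mul,
      ENNReal.toReal_ofReal (by positivity), measureReal_def]
  rw [← integral_indicator measurableSet_ball]
  simp_rw [hindicator]
  rw [integral_fun_norm_addHaar μ, hradial, hvolume]
  simp only [nsmul_eq_mul, smul_eq_mul]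
  ring

theorem setIntegral_smul_set_of_homogeneous {G : Type*} [NormedAddCommGroup G] [NormedSpace ℝ G]
    {f : E → G} {k : ℕ} (hk : k ≠ 0) (hf : ∀ (c : ℝ) (x : E), f (c • x) = c ^ k • f x)
    {s : ℝ} (hs : 0 ≤ s) (B : Set E) :
    ∫ x in s • B, f x ∂μ = s ^ (Module.finrank ℝ E + k) • ∫ x in B, f x ∂μ := by
  obtain rfl | hs := hs.eq_or_lt
  · have hzero : ∀ x ∈ (0 : ℝ) • B, f x = 0 := by
      rintro _ ⟨x, -, rfl⟩
      exact (hf 0 x).trans (by rw [zero_pow hk, zero_smul])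
    rw [setIntegral_eq_zero_of_forall_eq_zero hzero, zero_pow (by lia), zero_smul]
  · have hscale := Measure.setIntegral_comp_smul_of_pos μ f B hs
    simp only [hf, integral_smul] at hscale
    rw [pow_add, mul_smul, hscale, smul_inv_smul₀ (by positivity)]

end NormedSpace

section InnerProductSpace

variable {E : Type*} [NormedAddCommGroup E] [InnerProductSpace ℝ E] [FiniteDimensional ℝ E]
  [MeasurableSpace E] [BorelSpace E] (μ : Measure E) [μ.IsAddHaarMeasure]

theorem setIntegral_ball_comp_inner_congr {G : Type*} [NormedAddCommGroup G] [NormedSpace ℝ G]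
    (f : ℝ → G) (r : ℝ) {u v : E} (h : ‖u‖ = ‖v‖) :
    ∫ x in ball (0 : E) r, f (inner ℝ u x) ∂μ = ∫ x in ball (0 : E) r, f (inner ℝ v x) ∂μ := by
  set R := (ℝ ∙ (u - v))ᗮ.reflection
  have hR : R u = v := Submodule.reflection_sub h
  have hpre : R ⁻¹' ball 0 r = ball 0 r := by ext x; simp
  rw [← (measurePreserving_linearIsometryEquiv μ R).setIntegral_preimage_emb
    R.toMeasurableEquiv.measurableEmbedding (fun x => f (inner ℝ v x)), hpre, ← hR]
  simp_rw [R.inner_map_map]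

theorem setIntegral_ball_inner_sq {r : ℝ} (hr : 0 ≤ r) (v : E) :
    ∫ x in ball (0 : E) r, inner ℝ v x ^ 2 ∂μ =
      ‖v‖ ^ 2 / (Module.finrank ℝ E + 2 : ℝ) * r ^ 2 * μ.real (ball 0 r) := by
  obtain hE | hE := subsingleton_or_nontrivial E
  · simp [Subsingleton.elim v 0]
  set n := Module.finrank ℝ E
  have hn : (n : ℝ) ≠ 0 := Nat.cast_ne_zero.mpr Module.finrank_pos.ne'
  let b : OrthonormalBasis (Fin n) ℝ E := stdOrthonormalBasis ℝ E
  have hint (i : Fin n) : IntegrableOn (fun x => inner ℝ (b i) x ^ 2) (ball 0 r) μ :=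
    ((by fun_prop : Continuous fun x => inner ℝ (b i) x ^ 2).continuousOn.integrableOn_compact
      (isCompact_closedBall 0 r)).mono_set ball_subset_closedBall
  have hbasis (i : Fin n) : ∫ x in ball (0 : E) r, inner ℝ v x ^ 2 ∂μ =
      ‖v‖ ^ 2 * ∫ x in ball (0 : E) r, inner ℝ (b i) x ^ 2 ∂μ := by
    have hnorm : ‖v‖ = ‖‖v‖ • b i‖ := by simp [norm_smul]
    rw [setIntegral_ball_comp_inner_congr μ (· ^ 2) r hnorm, ← integral_const_mul]
    simp only [real_inner_smul_left, mul_pow]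
  apply mul_left_cancel₀ hn
  calc n * ∫ x in ball (0 : E) r, inner ℝ v x ^ 2 ∂μ
      = ∑ i, ‖v‖ ^ 2 * ∫ x in ball (0 : E) r, inner ℝ (b i) x ^ 2 ∂μ := by
        simp [← hbasis, n]
    _ = ‖v‖ ^ 2 * ∫ x in ball (0 : E) r, ‖x‖ ^ 2 ∂μ := by
        rw [← Finset.mul_sum, ← integral_finsetSum _ fun i _ => hint i]
        simp_rw [b.sum_sq_inner_right]
    _ = n * (‖v‖ ^ 2 / (n + 2 : ℝ) * r ^ 2 * μ.real (ball 0 r)) := by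
        rw [setIntegral_ball_norm_pow μ hr]
        push_cast
        ring

end InnerProductSpace

section PositiveDefinite

theorem exists_linearEquiv_euclideanSpace_inner_eq {V : Type*} [AddCommGroup V] [Module ℝ V]
    [FiniteDimensional ℝ V] {g : V →ₗ[ℝ] V →ₗ[ℝ] ℝ} (hsymm : g.IsSymm)
    (hpos : ∀ x, x ≠ 0 → 0 < g x x) :
    ∃ L : V ≃ₗ[ℝ] EuclideanSpace ℝ (Fin (Module.finrank ℝ V)),
      ∀ x y, inner ℝ (L x) (L y) = g x y := by
  -- `V` carries no norm here, so the one induced by `g` can be installed without a diamond.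
  let core : InnerProductSpace.Core ℝ V :=
    { inner := fun x y => g x y
      conj_inner_symm := fun x y => hsymm.eq y x
      re_inner_nonneg := fun x => by
        obtain rfl | hx := eq_or_ne x 0
        · simp
        · exact (hpos x hx).le
      add_left := fun x y z => by simp
      smul_left := fun x y r => by simp
      definite := fun x hx => by_contra fun hne => (hpos x hne).ne' hx }
  let _ : NormedAddCommGroup V := core.toNormedAddCommGroup
  let _ : InnerProductSpace ℝ V := InnerProductSpace.ofCore core.toCore
  exact ⟨(stdOrthonormalBasis ℝ V).repr.toLinearEquiv,
    fun x y => (stdOrthonormalBasis ℝ V).repr.inner_map_map x y⟩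

variable {V : Type*} [NormedAddCommGroup V] [NormedSpace ℝ V] [FiniteDimensional ℝ V]

theorem exists_continuousLinearEquiv_preimage_ball_eq {g : V →ₗ[ℝ] V →ₗ[ℝ] ℝ} (hsymm : g.IsSymm)
    (hpos : ∀ x, x ≠ 0 → 0 < g x x) :
    ∃ L : V ≃L[ℝ] EuclideanSpace ℝ (Fin (Module.finrank ℝ V)),
      (∀ x y, inner ℝ (L x) (L y) = g x y) ∧ L ⁻¹' ball 0 1 = {x | g x x < 1} := by
  obtain ⟨L, hL⟩ := exists_linearEquiv_euclideanSpace_inner_eq hsymm hpos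
  refine ⟨L.toContinuousLinearEquiv, hL, ?_⟩
  ext x
  simp [← hL]

variable [MeasurableSpace V] [BorelSpace V] (μ : Measure V) [μ.IsAddHaarMeasure]

theorem measureReal_unitBall_pos {g : V →ₗ[ℝ] V →ₗ[ℝ] ℝ} (hsymm : g.IsSymm)
    (hpos : ∀ x, x ≠ 0 → 0 < g x x) : 0 < μ.real {x | g x x < 1} := by
  obtain ⟨L, -, hpre⟩ := exists_continuousLinearEquiv_preimage_ball_eq hsymm hpos
  have := L.isAddHaarMeasure_map μ
  rw [← hpre, ← map_measureReal_apply L.continuous.measurable measurableSet_ball]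
  exact ENNReal.toReal_pos (measure_ball_pos _ _ one_pos).ne' measure_ball_lt_top.ne

theorem setIntegral_unitBall_apply_sq {g : V →ₗ[ℝ] V →ₗ[ℝ] ℝ} (hsymm : g.IsSymm)
    (hpos : ∀ x, x ≠ 0 → 0 < g x x) (x : V) :
    ∫ y in {y | g y y < 1}, g x y ^ 2 ∂μ =
      g x x / (Module.finrank ℝ V + 2 : ℝ) * μ.real {y | g y y < 1} := by
  obtain ⟨L, hL, hpre⟩ := exists_continuousLinearEquiv_preimage_ball_eq hsymm hpos
  have := L.isAddHaarMeasure_map μ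
  have hemb : MeasurableEmbedding L := L.toHomeomorph.measurableEmbedding
  have hmoment := setIntegral_ball_inner_sq (μ.map L) zero_le_one (L x)
  rw [hemb.setIntegral_map,
    map_measureReal_apply L.continuous.measurable measurableSet_ball, hpre,
    ← real_inner_self_eq_norm_sq, finrank_euclideanSpace_fin] at hmoment
  simpa only [hL, one_pow, mul_one] using hmoment

end PositiveDefinite

namespace IsBLMetric

variable {V : Type*} [AddCommGroup V] [Module ℝ V] [MeasurableSpace V] {n : ℕ} {μ : Measure V}
  {F : V → ℝ} {g : V →ₗ[ℝ] V →ₗ[ℝ] ℝ}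

theorem isSymm (hg : IsBLMetric n μ F g) : g.IsSymm where
  eq ξ η := by
    simp only [RingHom.id_apply, ← hg η (g ξ), ← hg ξ (g η), BLdual, mul_comm (g η _)]

theorem injective (hg : IsBLMetric n μ F g) : Function.Injective g := by
  refine (injective_iff_map_eq_zero g).mpr fun ξ hξ => ?_
  rw [← Module.forall_dual_apply_eq_zero_iff ℝ]
  intro φ
  simp [← hg ξ φ, hξ, BLdual]

theorem surjective [FiniteDimensional ℝ V] (hg : IsBLMetric n μ F g) : Function.Surjective g :=
  (LinearMap.injective_iff_surjective_of_finrank_eq_finrank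
    (Subspace.dual_finrank_eq (K := ℝ) (V := V)).symm).mp hg.injective

theorem apply_self_nonneg (hg : IsBLMetric n μ F g) (ξ : V) : 0 ≤ g ξ ξ := by
  rw [← hg ξ (g ξ), BLdual]
  have : 0 ≤ ∫ η in {η | F η < 1}, g ξ η * g ξ η ∂μ := integral_nonneg fun η => mul_self_nonneg _
  positivity

theorem apply_self_pos (hg : IsBLMetric n μ F g) (ξ : V) (hξ : ξ ≠ 0) : 0 < g ξ ξ := by
  refine (hg.apply_self_nonneg ξ).lt_of_ne' fun hzero => hξ (hg.injective ?_)
  rw [map_zero]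
  exact (LinearMap.BilinForm.apply_apply_same_eq_zero_iff g hg.apply_self_nonneg hg.isSymm).mp hzero

theorem setIntegral_apply_sq (hg : IsBLMetric n μ F g) (ξ : V) :
    ∫ η in {η | F η < 1}, g ξ η ^ 2 ∂μ = g ξ ξ / (n + 2 : ℝ) * μ.real {η | F η < 1} := by
  have hdual : (n + 2 : ℝ) / μ.real {η | F η < 1} * ∫ η in {η | F η < 1}, g ξ η ^ 2 ∂μ = g ξ ξ := by
    simpa only [BLdual, measureReal_def, sq] using hg ξ (g ξ)
  obtain hΩ | hΩ := eq_or_ne (μ.real {η | F η < 1}) 0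
  · have hξ : ξ = 0 := by
      by_contra hne
      refine (hg.apply_self_pos ξ hne).ne ?_
      rw [← hdual, hΩ, div_zero, zero_mul]
    simp [hξ]
  · rw [← hdual]
    field_simp

end IsBLMetric

theorem statement15_general (n : ℕ)
    (V : Type*) [NormedAddCommGroup V] [NormedSpace ℝ V] [FiniteDimensional ℝ V]
    [MeasurableSpace V] [BorelSpace V]
    (hdim : Module.finrank ℝ V = n)
    (μ : Measure V) [μ.IsAddHaarMeasure]
    (F : V → ℝ)
    (g : V →ₗ[ℝ] V →ₗ[ℝ] ℝ) (hg : IsBLMetric n μ F g)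
    (Ω B : Set V) (hΩ : Ω = {ξ | F ξ < 1}) (hB : B = {ξ | g ξ ξ < 1})
    (s : ℝ) (hs : s = ((μ Ω).toReal / (μ B).toReal) ^ ((1 : ℝ) / (n + 2))) :
    ∀ θ : V →ₗ[ℝ] ℝ,
      ∫ ξ in s • B, (θ ξ) ^ 2 ∂μ = ∫ ξ in Ω, (θ ξ) ^ 2 ∂μ := by
  subst hdim hΩ hB
  intro θ
  obtain ⟨ξ, rfl⟩ := hg.surjective θ
  set n := Module.finrank ℝ V
  set Ω := {η | F η < 1}
  set B := {η | g η η < 1}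
  have hBpos : 0 < μ.real B := measureReal_unitBall_pos μ hg.isSymm hg.apply_self_pos
  have hs_nonneg : 0 ≤ s := hs ▸ by positivity
  have hs_pow : s ^ (n + 2) = μ.real Ω / μ.real B := by
    rw [hs, one_div, ← Nat.cast_ofNat, ← Nat.cast_add,
      Real.rpow_inv_natCast_pow (by positivity) (by lia), measureReal_def, measureReal_def]
  calc ∫ η in s • B, g ξ η ^ 2 ∂μ
      = s ^ (n + 2) * ∫ η in B, g ξ η ^ 2 ∂μ :=
        setIntegral_smul_set_of_homogeneous μ two_ne_zero (by simp [mul_pow]) hs_nonneg B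
    _ = μ.real Ω / μ.real B * (g ξ ξ / (n + 2 : ℝ) * μ.real B) := by
        rw [hs_pow, setIntegral_unitBall_apply_sq μ hg.isSymm hg.apply_self_pos]
    _ = g ξ ξ / (n + 2 : ℝ) * μ.real Ω := by field_simp
    _ = ∫ η in Ω, g ξ η ^ 2 ∂μ := (hg.setIntegral_apply_sq ξ).symm

/-- The Legendre ellipsoid of `Ω = {F < 1}` is the dilate `s·B` of the unit ball `B`
of the Binet–Legendre metric `g_F` by the factor `s = (λ(Ω)/λ(B))^{1/(n+2)}`: the
dilated ball `s·B` has the same moment of inertia as `Ω` in every codirection `θ`. -/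
theorem statement15 (n : ℕ)
    (V : Type*) [NormedAddCommGroup V] [NormedSpace ℝ V] [FiniteDimensional ℝ V]
    [MeasurableSpace V] [BorelSpace V]
    (hdim : Module.finrank ℝ V = n)
    (μ : Measure V) [μ.IsAddHaarMeasure]
    (F : V → ℝ) (hF : IsMinkowskiNorm F)
    (g : V →ₗ[ℝ] V →ₗ[ℝ] ℝ) (hg : IsBLMetric n μ F g)
    (Ω B : Set V) (hΩ : Ω = {ξ | F ξ < 1}) (hB : B = {ξ | g ξ ξ < 1})
    (s : ℝ) (hs : s = ((μ Ω).toReal / (μ B).toReal) ^ ((1 : ℝ) / (n + 2))) :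
    ∀ θ : V →ₗ[ℝ] ℝ,
      ∫ ξ in s • B, (θ ξ) ^ 2 ∂μ = ∫ ξ in Ω, (θ ξ) ^ 2 ∂μ := by
  exact statement15_general n V hdim μ F g hg Ω B hΩ hB s hs
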